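/- arXiv:2310.09775 — 2 statements merged into one kernel-verified Lean document; each statement's English description precedes it below -/
import Mathlib

section
/- Let a, b, k be natural numbers with a ≥ 1, b ≥ 1 and k ≤ a + b − 2. Then ∫_ℝ x^k/((x−i)^a·(x+i)^b) dx = 2πi·(−1)^{a−1}·i^k·(2i)^{1−a−b}·∑_{j=0}^{a−1} C(k,j)·(−2)^j·C(a+b−2−j, a−1−j), where (2i)^{1−a−b} denotes the integer power of 2i with (possibly negative) exponent 1−a−b. -/
open MeasureTheory Complex

/-!
Expand the numerator in powers of `x - z`, where `z` is the pole in the upper half-plane, so that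
only the integrals `J m n` of `(x - z) ^ m * (x - w) ^ n` with `m + n ≤ -2` are needed. Since
`z - w` is the difference of `x - w` and `x - z`,
`(z - w) * J m n = J m (n + 1) - J (m + 1) n`,
which is Pascal's rule up to signs and powers of `z - w`. It reduces everything to the integrals
with a single pole, which vanish because the primitive of the integrand vanishes at both ends, and
to `J (-1) (-1)`. There the primitive of `z - w` times the integrand is a difference of logarithms,
and the contributions of the two ends of the real line add up to `2 * π * I`.
-/

section SubZPow

open Filter Topology Asymptotics Bornology

variable {z w : ℂ}

theorem ofReal_sub_ne_zero_of_im_ne_zero (hz : z.im ≠ 0) (x : ℝ) : (x : ℂ) - z ≠ 0 := by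
  intro h
  simpa [hz] using congrArg Complex.im h

theorem sub_ne_zero_of_im_pos_of_im_neg (hz : 0 < z.im) (hw : w.im < 0) : z - w ≠ 0 :=
  sub_ne_zero.mpr fun h => (hw.trans hz).ne' (congrArg Complex.im h)

theorem continuous_ofReal_sub_zpow (hz : z.im ≠ 0) (m : ℤ) :
    Continuous fun x : ℝ => ((x : ℂ) - z) ^ m :=
  Continuous.zpow₀ (by fun_prop) m fun x => Or.inl (ofReal_sub_ne_zero_of_im_ne_zero hz x)

theorem isTheta_ofReal_sub_cobounded (z : ℂ) :
    (fun x : ℝ => (x : ℂ) - z) =Θ[cobounded ℝ] fun x : ℝ => x := by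
  simpa only [sub_eq_add_neg] using!
    (isTheta_ofReal id (cobounded ℝ)).add_isLittleO (isLittleO_const_id_cobounded (-z))

theorem isBigO_zpow_inv_one_add_sq {k : ℤ} (hk : k ≤ -2) :
    (fun x : ℝ => x ^ k) =O[cobounded ℝ] fun x : ℝ => (1 + x ^ 2)⁻¹ := by
  refine IsBigO.of_bound 2 ?_
  filter_upwards [tendsto_norm_cobounded_atTop.eventually_ge_atTop 1] with x hx
  have hx_sq : 1 ≤ x ^ 2 := (one_le_sq_iff_one_le_abs x).mpr hx
  calc ‖x ^ k‖ = ‖x‖ ^ k := norm_zpow x k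
    _ ≤ ‖x‖ ^ (-2 : ℤ) := zpow_le_zpow_right₀ hx hk
    _ = (x ^ 2)⁻¹ := by rw [zpow_neg, zpow_ofNat, Real.norm_eq_abs, sq_abs]
    _ ≤ ((1 + x ^ 2) / 2)⁻¹ := inv_anti₀ (by positivity) (by linarith)
    _ = 2 * ‖(1 + x ^ 2)⁻¹‖ := by rw [Real.norm_of_nonneg (by positivity), inv_div, div_eq_mul_inv]

theorem integrable_sub_zpow_mul_sub_zpow (hz : z.im ≠ 0) (hw : w.im ≠ 0) {m n : ℤ}
    (hmn : m + n ≤ -2) : Integrable fun x : ℝ => ((x : ℂ) - z) ^ m * ((x : ℂ) - w) ^ n := by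
  have hcont := (continuous_ofReal_sub_zpow hz m).mul (continuous_ofReal_sub_zpow hw n)
  have htheta := ((isTheta_ofReal_sub_cobounded z).zpow m).mul
    ((isTheta_ofReal_sub_cobounded w).zpow n)
  have hzpow_add : (fun x : ℝ => x ^ m * x ^ n) =ᶠ[cobounded ℝ] fun x => x ^ (m + n) := by
    filter_upwards [eventually_ne_cobounded 0] with x hx using (zpow_add₀ hx m n).symm
  refine hcont.locallyIntegrable.integrable_of_isBigO_cocompact ?_
    (integrable_inv_one_add_sq.integrableAtFilter _)
  rw [← Metric.cobounded_eq_cocompact]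
  exact htheta.isBigO.trans (hzpow_add.trans_isBigO (isBigO_zpow_inv_one_add_sq hmn))

theorem tendsto_ofReal_sub_zpow_cobounded (z : ℂ) {n : ℤ} (hn : n < 0) :
    Tendsto (fun x : ℝ => ((x : ℂ) - z) ^ n) (cobounded ℝ) (𝓝 0) := by
  have hnorm : Tendsto (fun x : ℝ => ‖(x : ℂ) - z‖) (cobounded ℝ) atTop :=
    tendsto_norm_cobounded_atTop.comp
      ((tendsto_sub_const_cobounded z).comp (RCLike.tendsto_ofReal_cobounded_cobounded ℂ))
  refine tendsto_zero_iff_norm_tendsto_zero.mpr ?_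
  simpa only [norm_zpow] using! (tendsto_zpow_atTop_zero hn).comp hnorm

theorem integral_ofReal_sub_zpow (hz : z.im ≠ 0) {n : ℤ} (hn : n ≤ -2) :
    ∫ x : ℝ, ((x : ℂ) - z) ^ n = 0 := by
  have hn_succ : ((n + 1 : ℤ) : ℂ) ≠ 0 := by exact_mod_cast (by lia : n + 1 ≠ 0)
  have hderiv (x : ℝ) : HasDerivAt (fun x : ℝ => ((x : ℂ) - z) ^ (n + 1) / ((n + 1 : ℤ) : ℂ))
      (((x : ℂ) - z) ^ n) x := by
    have h := (hasDerivAt_zpow (n + 1) _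
      (Or.inl (ofReal_sub_ne_zero_of_im_ne_zero hz x))).comp_sub_const (x : ℂ) z
    simpa only [add_sub_cancel_right, mul_div_cancel_left₀ _ hn_succ] using!
      h.comp_ofReal.div_const ((n + 1 : ℤ) : ℂ)
  have hint : Integrable fun x : ℝ => ((x : ℂ) - z) ^ n := by
    simpa using integrable_sub_zpow_mul_sub_zpow hz hz (m := n) (n := 0) (by lia)
  have hlim : Tendsto (fun x : ℝ => ((x : ℂ) - z) ^ (n + 1) / ((n + 1 : ℤ) : ℂ))
      (cobounded ℝ) (𝓝 0) := by
    simpa using (tendsto_ofReal_sub_zpow_cobounded z (by lia : n + 1 < 0)).div_const _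
  simpa using integral_of_hasDerivAt_of_tendsto hderiv hint
    (hlim.mono_left IsOrderBornology.atBot_le_cobounded)
    (hlim.mono_left IsOrderBornology.atTop_le_cobounded)

theorem sub_mul_integral_sub_zpow_mul_sub_zpow (hz : z.im ≠ 0) (hw : w.im ≠ 0) {m n : ℤ}
    (hmn : m + n ≤ -3) :
    (z - w) * ∫ x : ℝ, ((x : ℂ) - z) ^ m * ((x : ℂ) - w) ^ n =
      (∫ x : ℝ, ((x : ℂ) - z) ^ m * ((x : ℂ) - w) ^ (n + 1)) -
        ∫ x : ℝ, ((x : ℂ) - z) ^ (m + 1) * ((x : ℂ) - w) ^ n := by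
  rw [← integral_sub (integrable_sub_zpow_mul_sub_zpow hz hw (by lia))
    (integrable_sub_zpow_mul_sub_zpow hz hw (by lia)), ← integral_const_mul]
  refine integral_congr_ae (.of_forall fun x => ?_)
  simp only [zpow_add_one₀ (ofReal_sub_ne_zero_of_im_ne_zero hz x),
    zpow_add_one₀ (ofReal_sub_ne_zero_of_im_ne_zero hw x)]
  ring

theorem integral_sub_zpow_mul_sub_zpow_of_nonneg (hz : z.im ≠ 0) (hw : w.im ≠ 0) {m n : ℤ}
    (hm : 0 ≤ m) (hmn : m + n ≤ -2) :
    ∫ x : ℝ, ((x : ℂ) - z) ^ m * ((x : ℂ) - w) ^ n = 0 := by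
  induction m, hm using Int.leInduction generalizing n with
  | base => simpa using integral_ofReal_sub_zpow hw (by lia : n ≤ -2)
  | succ m _ ih =>
    have hrec := sub_mul_integral_sub_zpow_mul_sub_zpow hz hw (m := m) (n := n) (by lia)
    rw [ih (by lia), ih (by lia)] at hrec
    simpa using hrec

theorem tendsto_log_mul_sub_sub_log_atTop {c : ℂ} (hc : c ∈ slitPlane) (z : ℂ) :
    Tendsto (fun t : ℝ => log (c * (t - z)) - Real.log t) atTop (𝓝 (log c)) := by
  have hscaled : Tendsto (fun t : ℝ => c * (1 - z * (t : ℂ)⁻¹)) atTop (𝓝 c) := by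
    have hinv : Tendsto (fun t : ℝ => ((t⁻¹ : ℝ) : ℂ)) atTop (𝓝 0) :=
      tendsto_inv_atTop_zero.ofReal
    simpa using ((hinv.const_mul z).const_sub 1).const_mul c
  refine (hscaled.clog hc).congr' ?_
  filter_upwards [eventually_gt_atTop 0,
    hscaled.eventually_ne (slitPlane_ne_zero hc)] with t ht hne
  have ht' : (t : ℂ) ≠ 0 := by exact_mod_cast ht.ne'
  have hfactor : c * (t - z) = t * (c * (1 - z * (t : ℂ)⁻¹)) := by field_simp
  rw [hfactor, log_ofReal_mul ht hne, add_sub_cancel_left]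

theorem tendsto_log_mul_sub_sub_log_atBot {c : ℂ} (hc : -c ∈ slitPlane) (z : ℂ) :
    Tendsto (fun t : ℝ => log (c * (t - z)) - Real.log t) atBot (𝓝 (log (-c))) := by
  refine ((tendsto_log_mul_sub_sub_log_atTop hc (-z)).comp tendsto_neg_atBot_atTop).congr
    fun t => ?_
  simp only [Function.comp_apply, ofReal_neg, Real.log_neg_eq_log, neg_sub_neg,
    neg_mul_comm, neg_sub]

theorem hasDerivAt_log_mul_ofReal_sub {c : ℂ} {x : ℝ} (h : c * (x - z) ∈ slitPlane) :
    HasDerivAt (fun t : ℝ => log (c * (t - z))) ((x : ℂ) - z)⁻¹ x := by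
  have hc : c ≠ 0 := left_ne_zero_of_mul (slitPlane_ne_zero h)
  have hlinear : HasDerivAt (fun t : ℂ => c * (t - z)) c x := by
    simpa using! ((hasDerivAt_id (x : ℂ)).sub_const z).const_mul c
  simpa [div_mul_cancel_left₀ hc] using! (hlinear.clog h).comp_ofReal

-- The factors `I` and `-I` rotate the two half-planes containing `x - z` and `x - w` to the right
-- half-plane, which avoids the branch cut of `log`.
theorem hasDerivAt_log_mul_sub_sub_log_mul_sub (hz : 0 < z.im) (hw : w.im < 0) (x : ℝ) :
    HasDerivAt (fun t : ℝ => log (I * (t - z)) - log (-I * (t - w)))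
      ((z - w) * (((x : ℂ) - z)⁻¹ * ((x : ℂ) - w)⁻¹)) x := by
  have hpartial : ((x : ℂ) - z)⁻¹ - ((x : ℂ) - w)⁻¹ =
      (z - w) * (((x : ℂ) - z)⁻¹ * ((x : ℂ) - w)⁻¹) := by
    rw [inv_sub_inv (ofReal_sub_ne_zero_of_im_ne_zero hz.ne' x)
      (ofReal_sub_ne_zero_of_im_ne_zero hw.ne x), sub_sub_sub_cancel_left, div_eq_mul_inv, mul_inv]
  rw [← hpartial]
  exact (hasDerivAt_log_mul_ofReal_sub (mem_slitPlane_iff.mpr (.inl (by simpa using hz)))).sub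
    (hasDerivAt_log_mul_ofReal_sub (mem_slitPlane_iff.mpr (.inl (by simpa using hw))))

theorem integral_inv_sub_mul_inv_sub (hz : 0 < z.im) (hw : w.im < 0) :
    ∫ x : ℝ, ((x : ℂ) - z)⁻¹ * ((x : ℂ) - w)⁻¹ = 2 * Real.pi * I / (z - w) := by
  have hI : I ∈ slitPlane := by simp [mem_slitPlane_iff]
  have hnegI : -I ∈ slitPlane := by simp [mem_slitPlane_iff]
  have htop := (tendsto_log_mul_sub_sub_log_atTop hI z).sub
    (tendsto_log_mul_sub_sub_log_atTop hnegI w)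
  have hbot := (tendsto_log_mul_sub_sub_log_atBot hnegI z).sub
    (tendsto_log_mul_sub_sub_log_atBot (c := -I) (by rwa [neg_neg]) w)
  simp only [sub_sub_sub_cancel_right, neg_neg] at htop hbot
  have hint : Integrable fun x : ℝ => ((x : ℂ) - z)⁻¹ * ((x : ℂ) - w)⁻¹ := by
    simpa only [zpow_neg_one] using
      integrable_sub_zpow_mul_sub_zpow hz.ne' hw.ne (by lia : (-1 : ℤ) + -1 ≤ -2)
  rw [eq_div_iff (sub_ne_zero_of_im_pos_of_im_neg hz hw), mul_comm, ← integral_const_mul,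
    integral_of_hasDerivAt_of_tendsto (hasDerivAt_log_mul_sub_sub_log_mul_sub hz hw)
      (hint.const_mul _) hbot htop, log_I, log_neg_I]
  ring

theorem integral_inv_sub_mul_sub_zpow_neg (hz : 0 < z.im) (hw : w.im < 0) (n : ℕ) :
    ∫ x : ℝ, ((x : ℂ) - z)⁻¹ * ((x : ℂ) - w) ^ (-(n + 1) : ℤ) =
      2 * Real.pi * I / (z - w) ^ (n + 1) := by
  induction n with
  | zero => simpa using integral_inv_sub_mul_inv_sub hz hw
  | succ n ih =>
    have hzw := sub_ne_zero_of_im_pos_of_im_neg hz hw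
    have hrec := sub_mul_integral_sub_zpow_mul_sub_zpow hz.ne' hw.ne (m := -1)
      (n := -((n + 1 : ℕ) + 1)) (by lia)
    have hvanish := integral_ofReal_sub_zpow hw.ne (n := -((n + 1 : ℕ) + 1)) (by lia)
    rw [show -((n + 1 : ℕ) + 1 : ℤ) + 1 = -(n + 1) by lia] at hrec
    simp only [zpow_neg_one, neg_add_cancel, zpow_zero, one_mul, hvanish, ih, sub_zero] at hrec
    rw [pow_succ, ← div_div, eq_div_iff hzw, mul_comm, hrec]

-- For `n = 0` both sides vanish: there is a single pole, and `(m - 1).choose m = 0`.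
theorem integral_sub_zpow_neg_mul_sub_zpow_neg (hz : 0 < z.im) (hw : w.im < 0) (m n : ℕ)
    (hmn : 1 ≤ m + n) :
    ∫ x : ℝ, ((x : ℂ) - z) ^ (-(m + 1) : ℤ) * ((x : ℂ) - w) ^ (-n : ℤ) =
      2 * Real.pi * I * ((-1) ^ m * (m + n - 1).choose m / (z - w) ^ (m + n)) := by
  induction m generalizing n with
  | zero =>
    obtain ⟨n, rfl⟩ := Nat.exists_eq_add_of_le' (by simpa using hmn : 1 ≤ n)
    simpa [div_eq_mul_inv] using integral_inv_sub_mul_sub_zpow_neg hz hw n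
  | succ m ihm =>
    induction n with
    | zero =>
      simpa using integral_ofReal_sub_zpow hz.ne' (by lia : -((m + 1 : ℕ) + 1 : ℤ) ≤ -2)
    | succ n ihn =>
      have hzw := sub_ne_zero_of_im_pos_of_im_neg hz hw
      have hrec := sub_mul_integral_sub_zpow_mul_sub_zpow hz.ne' hw.ne
        (m := -((m + 1 : ℕ) + 1)) (n := -(n + 1 : ℕ)) (by lia)
      have hpascal : (m + 1 + (n + 1) - 1).choose (m + 1) =
          (m + n).choose m + (m + n).choose (m + 1) := by
        rw [← Nat.choose_succ_succ]; congr 1; lia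
      rw [show -((m + 1 : ℕ) + 1 : ℤ) + 1 = -(m + 1) by lia,
        show -((n + 1 : ℕ) : ℤ) + 1 = -n by lia, ihm _ (by lia), ihn (by lia),
        show m + 1 + n - 1 = m + n by lia, show m + (n + 1) - 1 = m + n by lia] at hrec
      apply mul_left_cancel₀ hzw
      rw [hrec, hpascal]
      push_cast
      field_simp
      ring

theorem eval_div_eq_sum_taylor_coeff_mul_zpow {x : ℂ} (hx : x - z ≠ 0) (P : Polynomial ℂ)
    (a b : ℕ) {N : ℕ} (hN : P.natDegree < N) :
    P.eval x / ((x - z) ^ a * (x - w) ^ b) =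
      ∑ j ∈ Finset.range N,
        (P.taylor z).coeff j * ((x - z) ^ (j - a : ℤ) * (x - w) ^ (-b : ℤ)) := by
  rw [← P.taylor_eval_sub z x,
    Polynomial.eval_eq_sum_range' ((P.natDegree_taylor z).trans_lt hN), Finset.sum_div]
  refine Finset.sum_congr rfl fun j _ => ?_
  rw [zpow_sub₀ hx, zpow_neg, zpow_natCast, zpow_natCast, zpow_natCast, ← div_eq_mul_inv,
    div_div, mul_div_assoc]

theorem integral_eval_div_eq_sum_taylor_coeff_mul_integral (hz : z.im ≠ 0) (hw : w.im ≠ 0)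
    (P : Polynomial ℂ) {a b N : ℕ} (hP : P.natDegree + 2 ≤ a + b) (hN : P.natDegree < N) :
    ∫ x : ℝ, P.eval (x : ℂ) / (((x : ℂ) - z) ^ a * ((x : ℂ) - w) ^ b) =
      ∑ j ∈ Finset.range N, (P.taylor z).coeff j *
        ∫ x : ℝ, ((x : ℂ) - z) ^ (j - a : ℤ) * ((x : ℂ) - w) ^ (-b : ℤ) := by
  simp only [eval_div_eq_sum_taylor_coeff_mul_zpow (ofReal_sub_ne_zero_of_im_ne_zero hz _) P a b hN,
    ← integral_const_mul]
  refine integral_finsetSum _ fun j _ => ?_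
  rcases le_or_gt j P.natDegree with hj | hj
  · exact (integrable_sub_zpow_mul_sub_zpow hz hw (by lia)).const_mul _
  · simp [Polynomial.coeff_eq_zero_of_natDegree_lt ((P.natDegree_taylor z).trans_lt hj)]

theorem integral_eval_div_sub_pow_mul_sub_pow (hz : 0 < z.im) (hw : w.im < 0)
    (P : Polynomial ℂ) {a b : ℕ} (hP : P.natDegree + 2 ≤ a + b) :
    ∫ x : ℝ, P.eval (x : ℂ) / (((x : ℂ) - z) ^ a * ((x : ℂ) - w) ^ b) =
      2 * Real.pi * I * ∑ j ∈ Finset.range a, (P.taylor z).coeff j *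
        ((-1) ^ (a - 1 - j) * (a + b - 2 - j).choose (a - 1 - j) / (z - w) ^ (a + b - 1 - j)) := by
  have hcoeff {j : ℕ} (hj : P.natDegree < j) : (P.taylor z).coeff j = 0 :=
    Polynomial.coeff_eq_zero_of_natDegree_lt ((P.natDegree_taylor z).trans_lt hj)
  have hregular : ∀ i ∈ Finset.range (P.natDegree + 1), (P.taylor z).coeff (a + i) *
      ∫ x : ℝ, ((x : ℂ) - z) ^ ((a + i : ℕ) - a : ℤ) * ((x : ℂ) - w) ^ (-b : ℤ) = 0 := by
    intro i _
    rcases le_or_gt (a + i) P.natDegree with hi | hi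
    · rw [integral_sub_zpow_mul_sub_zpow_of_nonneg hz.ne' hw.ne (by lia) (by lia), mul_zero]
    · rw [hcoeff hi, zero_mul]
  rw [integral_eval_div_eq_sum_taylor_coeff_mul_integral hz.ne' hw.ne P hP
      (by lia : P.natDegree < a + (P.natDegree + 1)), Finset.sum_range_add,
    Finset.sum_eq_zero hregular, add_zero, Finset.mul_sum]
  refine Finset.sum_congr rfl fun j hj => ?_
  have hja : j < a := Finset.mem_range.mp hj
  rcases le_or_gt j P.natDegree with hjP | hjP
  · rw [show (j - a : ℤ) = -((a - 1 - j : ℕ) + 1) by lia,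
      integral_sub_zpow_neg_mul_sub_zpow_neg hz hw (a - 1 - j) b (by lia),
      show a - 1 - j + b - 1 = a + b - 2 - j by lia, show a - 1 - j + b = a + b - 1 - j by lia,
      mul_left_comm]
  · simp only [hcoeff hjP, zero_mul, mul_zero]

end SubZPow

theorem pow_sub_mul_neg_one_pow_sub_div_pow_sub {K : Type*} [Field K] {x y : K} (hx : x ≠ 0)
    (hy : y ≠ 0) {j k m n : ℕ} (hk : j ≤ k) (hm : j ≤ m) (hn : j ≤ n) :
    x ^ (k - j) * ((-1) ^ (m - j) / y ^ (n - j)) = (-1) ^ m * x ^ k / y ^ n * (-y / x) ^ j := by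
  obtain ⟨k, rfl⟩ := Nat.exists_eq_add_of_le' hk
  obtain ⟨m, rfl⟩ := Nat.exists_eq_add_of_le' hm
  obtain ⟨n, rfl⟩ := Nat.exists_eq_add_of_le' hn
  have hsign : (-1 : K) ^ j * (-1) ^ j = 1 := by rw [← mul_pow, neg_one_mul, neg_neg, one_pow]
  simp only [Nat.add_sub_cancel, pow_add, div_pow, neg_pow y]
  field_simp
  rw [sq, hsign]

theorem stmt1_general {z w : ℂ} (hz : 0 < z.im) (hw : w.im < 0) {a b k : ℕ}
    (hk : k + 2 ≤ a + b) :
    ∫ x : ℝ, (x : ℂ) ^ k / (((x : ℂ) - z) ^ a * ((x : ℂ) - w) ^ b) =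
      2 * Real.pi * I * (-1) ^ (a - 1) * z ^ k * (z - w) ^ (1 - a - b : ℤ) *
        ∑ j ∈ Finset.range a,
          (k.choose j : ℂ) * ((w - z) / z) ^ j * ((a + b - 2 - j).choose (a - 1 - j) : ℂ) := by
  have hz_ne : z ≠ 0 := fun h => hz.ne' (congrArg Complex.im h)
  have hzw := sub_ne_zero_of_im_pos_of_im_neg hz hw
  have hresidue := integral_eval_div_sub_pow_mul_sub_pow hz hw (Polynomial.X ^ k)
    (by simpa using hk : (Polynomial.X ^ k : Polynomial ℂ).natDegree + 2 ≤ a + b)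
  simp only [Polynomial.eval_pow, Polynomial.eval_X, Polynomial.taylor_X_pow,
    Polynomial.coeff_X_add_C_pow] at hresidue
  rw [hresidue, Finset.mul_sum, Finset.mul_sum, show (1 - a - b : ℤ) = -(a + b - 1 : ℕ) by lia,
    zpow_neg, zpow_natCast]
  refine Finset.sum_congr rfl fun j hj => ?_
  have hja : j < a := Finset.mem_range.mp hj
  rcases le_or_gt j k with hjk | hkj
  · have hcoeff := pow_sub_mul_neg_one_pow_sub_div_pow_sub hz_ne hzw hjk (by lia : j ≤ a - 1)
      (by lia : j ≤ a + b - 1)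
    rw [neg_sub] at hcoeff
    linear_combination 2 * Real.pi * I * k.choose j * (a + b - 2 - j).choose (a - 1 - j) * hcoeff
  · simp only [Nat.choose_eq_zero_of_lt hkj, Nat.cast_zero, mul_zero, zero_mul]

theorem stmt1 (a b k : ℕ) (ha : 1 ≤ a) (hb : 1 ≤ b) (hk : k ≤ a + b - 2) :
    ∫ x : ℝ, (x : ℂ) ^ k / (((x : ℂ) - I) ^ a * ((x : ℂ) + I) ^ b) =
      2 * (Real.pi : ℂ) * I * (-1) ^ (a - 1) * I ^ k * (2 * I) ^ ((1 : ℤ) - (a : ℤ) - (b : ℤ)) *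
        ∑ j ∈ Finset.range a,
          (k.choose j : ℂ) * (-2) ^ j * ((a + b - 2 - j).choose (a - 1 - j) : ℂ) := by
  have hratio : (-I - I) / I = -2 := by
    rw [← neg_add', ← two_mul, neg_div, mul_div_cancel_right₀ _ I_ne_zero]
  simpa [hratio, sub_neg_eq_add, ← two_mul] using
    stmt1_general (z := I) (w := -I) (by simp) (by simp) (by lia : k + 2 ≤ a + b)
end

section
/- Let m be a natural number with m ≥ 1. Then ∫_ℝ (2ix³ + x² + 2ix)/((x−i)^{m+3}·(x+i)^m) dx = (2πi/(m+2)!) · g^{(m+2)}(i), where g : ℂ → ℂ is g(z) = (2iz³ + z² + 2iz)/(z+i)^m. -/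
open MeasureTheory Complex

/-
By Cauchy's theorem on large squares resting on the real axis, a function holomorphic in the upper
half-plane that is `o(1 / z)` there has principal value `0` on the real line. If `g` merely tends to
`0`, apply this to `(g z - g w * k z) / (z - w)` with `k z = (w - conj w) / (z - conj w)`: since
`k z / (z - w)` is on the real line `2 * π * I` times the Poisson kernel, of mass `1`, the result is
Cauchy's formula for `g w`. If `g z = o(z ^ n)`, expand `g z = g w + (z - w) * dslope g w z`: the
first term contributes nothing when divided by `(z - w) ^ (n + 1)`, and the second lowers both the
order of the pole and the growth exponent by one, so Cauchy's formula for derivatives follows by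
induction on `n`.
-/

open Asymptotics Bornology Filter Polynomial Set
open scoped ComplexConjugate Interval Real Topology

section Infinity

/-- The filter of neighbourhoods of infinity in the closed upper half-plane, along which growth
conditions are imposed. -/
noncomputable def upperInfty : Filter ℂ := cobounded ℂ ⊓ 𝓟 {z | 0 ≤ z.im}

lemma upperInfty_le_cobounded : upperInfty ≤ cobounded ℂ := inf_le_left

lemma eventually_upperInfty_iff {p : ℂ → Prop} :
    (∀ᶠ z in upperInfty, p z) ↔ ∃ r : ℝ, ∀ z : ℂ, 0 ≤ z.im → r ≤ ‖z‖ → p z := by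
  simp only [upperInfty, eventually_inf_principal, mem_ofPred_eq]
  rw [← comap_norm_atTop, (atTop_basis.comap _).eventually_iff]
  simp only [true_and, mem_preimage, mem_Ici]
  exact exists_congr fun r => forall_congr' fun z => forall_comm

lemma isBigO_inv_sub_inv (w : ℂ) : (fun z => (z - w)⁻¹) =O[cobounded ℂ] (·⁻¹) := by
  refine (spectrum.resolvent_isBigO_inv (𝕜 := ℂ) w).congr_left fun z => ?_
  rw [resolvent, Ring.inverse_eq_inv', Algebra.algebraMap_self, RingHom.id_apply]

lemma isLittleO_inv_one : (fun z : ℂ => z⁻¹) =o[cobounded ℂ] (fun _ => (1 : ℂ)) :=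
  (isLittleO_one_iff ℂ).2 tendsto_inv₀_cobounded

end Infinity

variable {E : Type*} [NormedAddCommGroup E] [NormedSpace ℂ E]

section Dslope

variable {g : ℂ → E} {w : ℂ}

lemma dslope_eq_inv_smul_sub (g : ℂ → E) {z : ℂ} (hz : z ≠ w) :
    dslope g w z = (z - w)⁻¹ • (g z - g w) := by
  rw [dslope_of_ne g hz, slope_def_module]

lemma isLittleO_dslope {k : ℂ → ℂ} {l : Filter ℂ} (hl : l ≤ cobounded ℂ)
    (hg : (fun z => g z - g w) =o[l] k) : dslope g w =o[l] fun z => z⁻¹ * k z := by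
  have hslope : dslope g w =ᶠ[l] fun z => (z - w)⁻¹ • (g z - g w) := by
    filter_upwards [hl (eventually_ne_cobounded w)] with z hz using dslope_eq_inv_smul_sub g hz
  exact (((isBigO_inv_sub_inv w).mono hl).smul_isLittleO hg).congr' hslope.symm .rfl

variable [CompleteSpace E]

lemma diffContOnCl_dslope {s : Set ℂ} (hg : DiffContOnCl ℂ g s) (hs : s ∈ 𝓝 w) :
    DiffContOnCl ℂ (dslope g w) s :=
  ⟨(differentiableOn_dslope hs).2 hg.differentiableOn,
    (continuousOn_dslope (mem_of_superset hs subset_closure)).2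
      ⟨hg.continuousOn, hg.differentiableAt' hs⟩⟩

lemma iteratedDeriv_eq_factorial_smul_coeff {p : FormalMultilinearSeries ℂ ℂ E}
    (hp : HasFPowerSeriesAt g p w) (n : ℕ) : iteratedDeriv n g w = n.factorial • p.coeff n := by
  obtain ⟨r, hr⟩ := hp
  rw [iteratedDeriv_eq_iteratedFDeriv]
  exact (hr.factorial_smul 1 n).symm

lemma iteratedDeriv_succ_eq_smul_iteratedDeriv_dslope (hg : AnalyticAt ℂ g w) (n : ℕ) :
    iteratedDeriv (n + 1) g w = (n + 1) • iteratedDeriv n (dslope g w) w := by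
  obtain ⟨p, hp⟩ := hg
  rw [iteratedDeriv_eq_factorial_smul_coeff hp,
    iteratedDeriv_eq_factorial_smul_coeff hp.has_fpower_series_dslope_fslope,
    FormalMultilinearSeries.coeff_fslope, Nat.factorial_succ, mul_smul]

end Dslope

section PrincipalValue

/-- `f` has Cauchy principal value `a` at infinity: its integrals over the symmetric intervals
`[-R, R]` tend to `a`. Integrability of `f` on the whole line is not required. -/
def HasPrincipalValue (f : ℝ → E) (a : E) : Prop :=
  Tendsto (fun R : ℝ => ∫ x in -R..R, f x) atTop (𝓝 a)

namespace HasPrincipalValue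

variable {f g : ℝ → E} {a b : E}

lemma add (hf : HasPrincipalValue f a) (hg : HasPrincipalValue g b) (hfc : Continuous f)
    (hgc : Continuous g) : HasPrincipalValue (fun x => f x + g x) (a + b) :=
  (Tendsto.add hf hg).congr fun _ =>
    (intervalIntegral.integral_add (hfc.intervalIntegrable _ _) (hgc.intervalIntegrable _ _)).symm

lemma smul_const {f : ℝ → ℂ} {c : ℂ} (hf : HasPrincipalValue f c) (v : E) [CompleteSpace E] :
    HasPrincipalValue (fun x => f x • v) (c • v) :=
  (Tendsto.smul_const hf v).congr fun _ => (intervalIntegral.integral_smul_const _ _).symm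

lemma of_comp_neg (hf : HasPrincipalValue (fun x => f (-x)) a) : HasPrincipalValue f a :=
  Tendsto.congr (fun R => by simp) hf

lemma of_integrable (hf : Integrable f) : HasPrincipalValue f (∫ x, f x) :=
  intervalIntegral_tendsto_integral hf tendsto_neg_atTop_atBot tendsto_id

lemma integral_eq (h : HasPrincipalValue f a) (hf : Integrable f) : ∫ x, f x = a :=
  tendsto_nhds_unique (of_integrable hf) h

end HasPrincipalValue

end PrincipalValue

section UpperHalfPlane

variable {g : ℂ → E} {w : ℂ}

lemma ofReal_ne_of_im_pos (hw : 0 < w.im) (x : ℝ) : (x : ℂ) ≠ w :=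
  ne_of_apply_ne im (by simpa using hw.ne)

lemma ne_conj_of_im_pos (hw : 0 < w.im) {z : ℂ} (hz : 0 ≤ z.im) : z ≠ conj w :=
  ne_of_apply_ne im (by rw [conj_im]; linarith)

lemma continuous_inv_ofReal_sub_pow (hw : 0 < w.im) (n : ℕ) :
    Continuous fun x : ℝ => (((x : ℂ) - w) ^ n)⁻¹ :=
  Continuous.inv₀ (by fun_prop) fun x => pow_ne_zero n (sub_ne_zero.2 (ofReal_ne_of_im_pos hw x))

lemma continuousOn_of_diffContOnCl (hg : DiffContOnCl ℂ g {z | 0 < z.im}) :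
    ContinuousOn g {z | 0 ≤ z.im} := by
  simpa only [closure_setOfPred_lt_im] using hg.continuousOn

lemma continuous_comp_ofReal_of_diffContOnCl (hg : DiffContOnCl ℂ g {z | 0 < z.im}) :
    Continuous fun x : ℝ => g x :=
  (continuousOn_of_diffContOnCl hg).comp_continuous continuous_ofReal fun x => (ofReal_im x).ge

lemma integral_boundary_square_eq_zero {R : ℝ} (hR : 0 ≤ R)
    (hg : DiffContOnCl ℂ g {z | 0 < z.im}) :
    (∫ x : ℝ in -R..R, g x) - (∫ x : ℝ in -R..R, g (x + R * I)) +
      I • (∫ y : ℝ in 0..R, g (R + y * I)) - I • (∫ y : ℝ in 0..R, g (-R + y * I)) = 0 := by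
  have hclosed : [[-R, R]] ×ℂ [[0, R]] ⊆ {z | 0 ≤ z.im} := fun z hz =>
    (uIcc_of_le hR ▸ hz.2 : z.im ∈ Icc 0 R).1
  have hopen : Ioo (min (-R) R) (max (-R) R) ×ℂ Ioo (min 0 R) (max 0 R) ⊆ {z | 0 < z.im} :=
    fun z hz => (min_eq_left hR).symm.trans_lt hz.2.1
  simpa using integral_boundary_rect_eq_zero_of_continuousOn_of_differentiableOn g ⟨-R, 0⟩ ⟨R, R⟩
    ((continuousOn_of_diffContOnCl hg).mono hclosed) (hg.differentiableOn.mono hopen)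

lemma norm_integral_le_of_upperHalfPlane {R C : ℝ} (hR : 0 ≤ R)
    (hg : DiffContOnCl ℂ g {z | 0 < z.im}) (hC : ∀ z : ℂ, 0 ≤ z.im → R ≤ ‖z‖ → ‖g z‖ ≤ C) :
    ‖∫ x : ℝ in -R..R, g x‖ ≤ C * (4 * R) := by
  have hbound {a b : ℝ} {γ : ℝ → ℂ} (hγ : ∀ t ∈ Ι a b, 0 ≤ (γ t).im ∧ R ≤ ‖γ t‖) :
      ‖∫ t in a..b, g (γ t)‖ ≤ C * |b - a| :=
    intervalIntegral.norm_integral_le_of_norm_le_const fun t ht => hC _ (hγ t ht).1 (hγ t ht).2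
  have hpos {t : ℝ} (ht : t ∈ Ι 0 R) : 0 ≤ t := (uIoc_of_le hR ▸ ht).1.le
  have htop : ‖∫ x : ℝ in -R..R, g (x + R * I)‖ ≤ C * |R - -R| := hbound fun x _ =>
    ⟨by simpa using hR, by simpa [abs_of_nonneg hR] using abs_im_le_norm (x + R * I)⟩
  have hright : ‖∫ y : ℝ in 0..R, g (R + y * I)‖ ≤ C * |R - 0| := hbound fun y hy =>
    ⟨by simpa using hpos hy, by simpa [abs_of_nonneg hR] using abs_re_le_norm (R + y * I)⟩
  have hleft : ‖∫ y : ℝ in 0..R, g (-R + y * I)‖ ≤ C * |R - 0| := hbound fun y hy =>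
    ⟨by simpa using hpos hy, by simpa [abs_of_nonneg hR] using abs_re_le_norm (-R + y * I)⟩
  rw [sub_zero, abs_of_nonneg hR] at hright hleft
  rw [sub_neg_eq_add, abs_of_nonneg (by positivity)] at htop
  have hbottom : ∫ x : ℝ in -R..R, g x = (∫ x : ℝ in -R..R, g (x + R * I)) -
      I • (∫ y : ℝ in 0..R, g (R + y * I)) + I • (∫ y : ℝ in 0..R, g (-R + y * I)) := by
    rw [← sub_eq_zero, ← integral_boundary_square_eq_zero hR hg]
    abel
  calc ‖∫ x : ℝ in -R..R, g x‖
      ≤ ‖∫ x : ℝ in -R..R, g (x + R * I)‖ + ‖∫ y : ℝ in 0..R, g (R + y * I)‖ +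
          ‖∫ y : ℝ in 0..R, g (-R + y * I)‖ := by
        rw [hbottom]
        refine (norm_add_le_of_le (norm_sub_le _ _) le_rfl).trans_eq ?_
        simp only [norm_smul, norm_I, one_mul]
    _ ≤ C * (R + R) + C * R + C * R := by gcongr
    _ = C * (4 * R) := by ring

theorem hasPrincipalValue_zero_of_isLittleO_inv (hg : DiffContOnCl ℂ g {z | 0 < z.im})
    (ho : g =o[upperInfty] (·⁻¹)) : HasPrincipalValue (fun x => g x) 0 := by
  refine (isLittleO_one_iff ℝ).1 (isLittleO_iff.2 fun ε hε => ?_)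
  obtain ⟨r, hr⟩ := eventually_upperInfty_iff.1 (isLittleO_iff.1 ho (show 0 < ε / 4 by positivity))
  filter_upwards [eventually_gt_atTop 0, eventually_ge_atTop r] with R hR hrR
  have hC (z : ℂ) (hz : 0 ≤ z.im) (hRz : R ≤ ‖z‖) : ‖g z‖ ≤ ε / 4 * R⁻¹ := by
    refine (hr z hz (hrR.trans hRz)).trans ?_
    rw [norm_inv]
    gcongr
  refine (norm_integral_le_of_upperHalfPlane hR.le hg hC).trans_eq ?_
  rw [norm_one]
  field_simp

lemma hasPrincipalValue_inv_sub_pow (hw : 0 < w.im) (n : ℕ) :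
    HasPrincipalValue (fun x => (((x : ℂ) - w) ^ (n + 2))⁻¹) 0 := by
  -- The reflection `x ↦ -x` moves the pole to `-w`, outside the closed upper half-plane.
  refine .of_comp_neg ?_
  have hne (z : ℂ) (hz : z ∈ closure {z : ℂ | 0 < z.im}) : (-z - w) ^ (n + 2) ≠ 0 := by
    rw [closure_setOfPred_lt_im] at hz
    refine pow_ne_zero _ fun h => ?_
    have him : -z.im - w.im = 0 := by simpa using congrArg im h
    linarith [mem_ofPred_eq ▸ hz]
  have hd : DiffContOnCl ℂ (fun z => ((-z - w) ^ (n + 2))⁻¹) {z | 0 < z.im} :=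
    DiffContOnCl.inv (Differentiable.diffContOnCl (by fun_prop)) hne
  have ho : (fun z => ((-z - w) ^ (n + 2))⁻¹) =o[cobounded ℂ] (·⁻¹) := by
    have hO : (fun z => (-z - w)⁻¹) =O[cobounded ℂ] (·⁻¹) :=
      (isBigO_inv_sub_inv (-w)).neg_left.congr_left fun z => by rw [← inv_neg]; ring
    have ho : (fun z : ℂ => z⁻¹ ^ (n + 2)) =o[cobounded ℂ] (·⁻¹) := by
      simpa [pow_succ'] using
        (isBigO_refl (·⁻¹) _).mul_isLittleO (isLittleO_inv_one.pow n.succ_pos)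
    simpa using (hO.pow (n + 2)).trans_isLittleO ho
  simpa using hasPrincipalValue_zero_of_isLittleO_inv hd (ho.mono upperInfty_le_cobounded)

lemma poissonKernel_eq_cauchyPDFReal (hw : 0 < w.im) (x : ℝ) :
    ((x : ℂ) - w)⁻¹ * ((w - conj w) / (x - conj w)) =
      2 * π * I * (ProbabilityTheory.cauchyPDFReal w.re w.im.toNNReal x : ℂ) := by
  have hden : ((x : ℂ) - w) * (x - conj w) = (x - w.re) ^ 2 + w.im ^ 2 :=
    Complex.ext (by simp [pow_two]) (by simp [pow_two]; ring)
  have hne : ((x : ℂ) - w) * (x - conj w) ≠ 0 :=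
    mul_ne_zero (sub_ne_zero.2 (ofReal_ne_of_im_pos hw x))
      (sub_ne_zero.2 (ne_conj_of_im_pos hw (ofReal_im x).ge))
  have hπ : (π : ℂ) ≠ 0 := ofReal_ne_zero.2 Real.pi_ne_zero
  rw [inv_mul_eq_div, div_div, mul_comm ((x : ℂ) - conj w), sub_conj,
    ProbabilityTheory.cauchyPDFReal_def, Real.coe_toNNReal _ hw.le]
  rw [hden] at hne ⊢
  push_cast
  field_simp

lemma hasPrincipalValue_poissonKernel (hw : 0 < w.im) :
    HasPrincipalValue (fun x => ((x : ℂ) - w)⁻¹ * ((w - conj w) / (x - conj w))) (2 * π * I) := by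
  have hint : Integrable fun x =>
      2 * π * I * (ProbabilityTheory.cauchyPDFReal w.re w.im.toNNReal x : ℂ) :=
    (ProbabilityTheory.integrable_cauchyPDFReal w.re).ofReal.const_mul _
  have hpv := HasPrincipalValue.of_integrable hint
  rw [integral_const_mul, integral_complex_ofReal,
    ProbabilityTheory.integral_cauchyPDFReal_eq_one _ (Real.toNNReal_pos.2 hw).ne', ofReal_one,
    mul_one] at hpv
  simpa only [poissonKernel_eq_cauchyPDFReal hw] using hpv

variable [CompleteSpace E]

theorem hasPrincipalValue_inv_sub_smul (hw : 0 < w.im) (hg : DiffContOnCl ℂ g {z | 0 < z.im})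
    (ho : Tendsto g upperInfty (𝓝 0)) :
    HasPrincipalValue (fun x => ((x : ℂ) - w)⁻¹ • g x) ((2 * π * I) • g w) := by
  let k : ℂ → ℂ := fun z => (w - conj w) / (z - conj w)
  let h : ℂ → E := fun z => g z - k z • g w
  have hne (z : ℂ) (hz : 0 ≤ z.im) : z - conj w ≠ 0 := sub_ne_zero.2 (ne_conj_of_im_pos hw hz)
  have hhw : h w = 0 := by simp [h, k, div_self (hne w hw.le)]
  have hkd : DiffContOnCl ℂ k {z | 0 < z.im} := by
    refine DifferentiableOn.diffContOnCl ?_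
    rw [closure_setOfPred_lt_im]
    exact DifferentiableOn.div (by fun_prop) (by fun_prop) hne
  have hko : Tendsto k upperInfty (𝓝 0) := by
    have hinv : Tendsto (fun z : ℂ => (z - conj w)⁻¹) (cobounded ℂ) (𝓝 0) :=
      (isBigO_inv_sub_inv (conj w)).trans_tendsto tendsto_inv₀_cobounded
    simpa [k, div_eq_mul_inv] using (hinv.mono_left upperInfty_le_cobounded).const_mul (w - conj w)
  have hhd : DiffContOnCl ℂ h {z | 0 < z.im} := hg.sub (hkd.smul_const (g w))
  have hho : (fun z => h z - h w) =o[upperInfty] fun _ => (1 : ℂ) := by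
    rw [isLittleO_one_iff, hhw]
    simpa [h] using ho.sub (hko.smul_const (g w))
  have hsd := diffContOnCl_dslope hhd (UpperHalfPlane.isOpen_upperHalfPlaneSet.mem_nhds hw)
  have hslope := hasPrincipalValue_zero_of_isLittleO_inv hsd
    (by simpa using isLittleO_dslope upperInfty_le_cobounded hho)
  have hpoisson := (hasPrincipalValue_poissonKernel hw).smul_const (g w)
  have hpc : Continuous fun x : ℝ => (((x : ℂ) - w)⁻¹ * k x) • g w := by
    refine Continuous.smul (Continuous.mul ?_ ?_) continuous_const
    · simpa using continuous_inv_ofReal_sub_pow hw 1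
    · exact continuous_comp_ofReal_of_diffContOnCl hkd
  have hsum := hslope.add hpoisson (continuous_comp_ofReal_of_diffContOnCl hsd) hpc
  rw [zero_add] at hsum
  convert hsum using 2 with x
  rw [dslope_eq_inv_smul_sub h (ofReal_ne_of_im_pos hw x), hhw, sub_zero, mul_smul, ← smul_add,
    sub_add_cancel]

theorem hasPrincipalValue_inv_sub_pow_smul (hw : 0 < w.im) (n : ℕ)
    (hg : DiffContOnCl ℂ g {z | 0 < z.im}) (ho : g =o[upperInfty] (· ^ n)) :
    HasPrincipalValue (fun x => (((x : ℂ) - w) ^ (n + 1))⁻¹ • g x)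
      ((2 * π * I / n.factorial) • iteratedDeriv n g w) := by
  have hnhds : {z : ℂ | 0 < z.im} ∈ 𝓝 w := UpperHalfPlane.isOpen_upperHalfPlaneSet.mem_nhds hw
  induction n generalizing g with
  | zero =>
    simpa using hasPrincipalValue_inv_sub_smul hw hg ((isLittleO_one_iff ℂ).1 (by simpa using ho))
  | succ n ih =>
    have hd := diffContOnCl_dslope hg hnhds
    have hconst : (fun _ => g w) =o[upperInfty] fun z : ℂ => z ^ (n + 1) := by
      refine (isLittleO_const_left.2 (.inr ?_)).mono upperInfty_le_cobounded
      simpa [Function.comp_def] using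
        (tendsto_pow_atTop n.succ_ne_zero).comp (tendsto_norm_cobounded_atTop (E := ℂ))
    have hdo : dslope g w =o[upperInfty] (· ^ n) := by
      refine (isLittleO_dslope upperInfty_le_cobounded (ho.sub hconst)).congr' .rfl ?_
      filter_upwards [upperInfty_le_cobounded (eventually_ne_cobounded 0)] with z hz
      rw [pow_succ', inv_mul_cancel_left₀ hz]
    have hsum := ((hasPrincipalValue_inv_sub_pow hw n).smul_const (g w)).add (ih hd hdo)
      ((continuous_inv_ofReal_sub_pow hw _).smul continuous_const)
      ((continuous_inv_ofReal_sub_pow hw _).smul (continuous_comp_ofReal_of_diffContOnCl hd))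
    convert hsum using 1
    · ext x
      rw [dslope_eq_inv_smul_sub g (ofReal_ne_of_im_pos hw x), smul_smul, ← mul_inv, ← pow_succ,
        ← smul_add, add_sub_cancel]
    · have hga : AnalyticAt ℂ g w := hg.differentiableOn.analyticAt hnhds
      have hn : (n : ℂ) + 1 ≠ 0 := Nat.cast_add_one_ne_zero n
      rw [iteratedDeriv_succ_eq_smul_iteratedDeriv_dslope hga, ← Nat.cast_smul_eq_nsmul ℂ,
        smul_smul, zero_smul, zero_add, Nat.factorial_succ]
      push_cast
      congr 1
      field_simp

end UpperHalfPlane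

section Rational

variable {P Q : ℂ[X]}

lemma integrable_eval_div_eval (hQ : ∀ x : ℝ, Q.eval (x : ℂ) ≠ 0)
    (hdeg : P.natDegree + 2 ≤ Q.natDegree) :
    Integrable fun x : ℝ => P.eval (x : ℂ) / Q.eval (x : ℂ) := by
  have hcont : Continuous fun x : ℝ => P.eval (x : ℂ) / Q.eval (x : ℂ) :=
    Continuous.div (by fun_prop) (by fun_prop) hQ
  have hO : (P * (1 + X ^ 2)).eval =O[cobounded ℂ] Q.eval := by
    have hquad : (1 + X ^ 2 : ℂ[X]).natDegree ≤ 2 := by compute_degree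
    have hmul : (P * (1 + X ^ 2)).natDegree ≤ Q.natDegree :=
      natDegree_mul_le.trans ((Nat.add_le_add_left hquad _).trans hdeg)
    have hQ0 : Q ≠ 0 := ne_zero_of_natDegree_gt (n := 0) (by omega)
    exact isBigO_cobounded_of_degree_le
      ((degree_le_of_natDegree_le hmul).trans_eq (degree_eq_natDegree hQ0).symm)
  have hdecay : (fun x : ℝ => P.eval (x : ℂ) / Q.eval (x : ℂ)) =O[cocompact ℝ]
      fun x : ℝ => (1 + x ^ 2)⁻¹ := by
    have hcob : Tendsto (fun x : ℝ => (x : ℂ)) (cocompact ℝ) (cobounded ℂ) := by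
      rw [Metric.cobounded_eq_cocompact]
      exact isometry_ofReal.isClosedEmbedding.tendsto_cocompact
    obtain ⟨c, hc⟩ := (hO.comp_tendsto hcob).bound
    refine IsBigO.of_bound c (hc.mono fun x hx => ?_)
    have hpos : 0 < 1 + x ^ 2 := by positivity
    have hnorm : ‖(1 + (x : ℂ) ^ 2)‖ = 1 + x ^ 2 := by
      rw [show 1 + (x : ℂ) ^ 2 = ((1 + x ^ 2 : ℝ) : ℂ) by push_cast; rfl, norm_real,
        Real.norm_of_nonneg hpos.le]
    have hbound : ‖P.eval (x : ℂ)‖ * (1 + x ^ 2) ≤ c * ‖Q.eval (x : ℂ)‖ := by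
      simpa [hnorm] using hx
    rw [norm_div, norm_inv, Real.norm_of_nonneg hpos.le, div_le_iff₀ (norm_pos_iff.2 (hQ x)),
      mul_right_comm, ← div_eq_mul_inv, le_div_iff₀ hpos]
    exact hbound
  exact hcont.locallyIntegrable.integrable_of_isBigO_cocompact hdecay
    (integrable_inv_one_add_sq.integrableAtFilter _)

lemma diffContOnCl_eval_div_eval (hQ : ∀ z : ℂ, 0 ≤ z.im → Q.eval z ≠ 0) :
    DiffContOnCl ℂ (fun z => P.eval z / Q.eval z) {z | 0 < z.im} := by
  refine DifferentiableOn.diffContOnCl ?_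
  rw [closure_setOfPred_lt_im]
  exact P.differentiableOn.div Q.differentiableOn hQ

lemma isLittleO_eval_div_eval {n : ℕ} (hdeg : P.natDegree < Q.natDegree + n) (hQ : Q ≠ 0) :
    (fun z => P.eval z / Q.eval z) =o[cobounded ℂ] (· ^ n) := by
  have ho : P.eval =o[cobounded ℂ] (Q * X ^ n).eval :=
    isLittleO_cobounded_of_degree_lt (degree_lt_degree (by rwa [natDegree_mul_X_pow _ hQ]))
  have hroot : ∀ᶠ z in cobounded ℂ, Q.eval z ≠ 0 :=
    le_cofinite ℂ (eventually_cofinite_not_isRoot hQ)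
  refine ((isBigO_refl (fun z => (Q.eval z)⁻¹) _).mul_isLittleO ho).congr' ?_ ?_
  · exact .of_forall fun z => (div_eq_inv_mul _ _).symm
  · filter_upwards [hroot] with z hz
    rw [eval_mul, eval_pow, eval_X, inv_mul_cancel_left₀ hz]

theorem integral_eval_div_pow_mul_eval {w : ℂ} (hw : 0 < w.im) (n : ℕ)
    (hQ : ∀ z : ℂ, 0 ≤ z.im → Q.eval z ≠ 0) (hdeg : P.natDegree < Q.natDegree + n) :
    ∫ x : ℝ, P.eval (x : ℂ) / (((x : ℂ) - w) ^ (n + 1) * Q.eval (x : ℂ)) =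
      2 * π * I / n.factorial * iteratedDeriv n (fun z => P.eval z / Q.eval z) w := by
  have hQ0 : Q ≠ 0 := fun h => hQ w hw.le (by rw [h, eval_zero])
  have hpv := hasPrincipalValue_inv_sub_pow_smul hw n (diffContOnCl_eval_div_eval (P := P) hQ)
    ((isLittleO_eval_div_eval hdeg hQ0).mono upperInfty_le_cobounded)
  have hint : Integrable fun x : ℝ =>
      P.eval (x : ℂ) / ((X - C w) ^ (n + 1) * Q).eval (x : ℂ) := by
    refine integrable_eval_div_eval (fun x => ?_) ?_
    · simpa [sub_eq_zero, ofReal_ne_of_im_pos hw x] using hQ x (ofReal_im x).ge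
    · rw [((monic_X_sub_C w).pow _).natDegree_mul' hQ0, natDegree_pow, natDegree_X_sub_C]
      omega
  simp only [eval_mul, eval_pow, eval_sub, eval_X, eval_C] at hint
  refine HasPrincipalValue.integral_eq (hpv.congr fun R => ?_) hint
  simp only [smul_eq_mul, div_eq_mul_inv, mul_inv, mul_left_comm]

end Rational

theorem stmt11 (m : ℕ) (hm : 1 ≤ m) :
    ∫ x : ℝ, (2 * I * (x : ℂ) ^ 3 + (x : ℂ) ^ 2 + 2 * I * (x : ℂ)) /
        (((x : ℂ) - I) ^ (m + 3) * ((x : ℂ) + I) ^ m) =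
      (2 * (Real.pi : ℂ) * I / (Nat.factorial (m + 2) : ℂ)) *
        iteratedDeriv (m + 2)
          (fun z : ℂ => (2 * I * z ^ 3 + z ^ 2 + 2 * I * z) / (z + I) ^ m) I := by
  let P : ℂ[X] := C (2 * I) * X ^ 3 + X ^ 2 + C (2 * I) * X
  let Q : ℂ[X] := (X + C I) ^ m
  have hQ (z : ℂ) (hz : 0 ≤ z.im) : Q.eval z ≠ 0 := by
    have hne : z + I ≠ 0 := by simpa using sub_ne_zero.2 (ne_conj_of_im_pos (w := I) (by simp) hz)
    simpa [Q] using pow_ne_zero m hne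
  have hP : P.natDegree ≤ 3 := by unfold P; compute_degree
  have hQm : Q.natDegree = m := by
    rw [natDegree_pow, natDegree_X_add_C, mul_one]
  simpa [P, Q] using integral_eval_div_pow_mul_eval (w := I) (by simp) (m + 2) hQ
    (show P.natDegree < _ by omega)
end
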